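/- Let B and B' be unital associative ℂ-algebras such that B' has countable dimension over ℂ. Let M' be a B'-module whose only B'-invariant subspaces are 0 and M' (a strictly simple module), and let M be any B-module. Then the tensor product M ⊗_ℂ M' is a simple module over the algebra B ⊗_ℂ B' (acting by (b ⊗ b')·(x ⊗ x') = bx ⊗ b'x') if and only if M is a simple B-module. -/

import Mathlib

open TensorProduct

open Polynomial in
/-- The vectors `(f - c)⁻¹ y`, for varying scalars `c`, are linearly independent when `f` has empty
spectrum. -/
theorem linearIndependent_of_spectrum_eq_empty {K V : Type*} [Field K] [IsAlgClosed K]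
    [AddCommGroup V] [Module K V] {f : Module.End K V} (hf : spectrum K f = ∅) {y : V} (hy : y ≠ 0)
    {v : K → V} (hv : ∀ c, (f - algebraMap K (Module.End K V) c) (v c) = y) :
    LinearIndependent K v := by
  classical
  rw [linearIndependent_iff']
  intro s a ha i hi
  by_contra hai
  set P : K[X] := ∑ i ∈ s, C (a i) * ∏ j ∈ s.erase i, (X - C j) with hP
  have hP0 : P ≠ 0 := by
    intro h
    have h1 : P.eval i = a i * ∏ j ∈ s.erase i, (i - j) := by
      rw [hP, eval_finsetSum, Finset.sum_eq_single_of_mem i hi]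
      · simp [eval_prod]
      · intro j _ hji
        rw [eval_mul, eval_prod, Finset.prod_eq_zero (Finset.mem_erase.2 ⟨hji.symm, hi⟩) (by simp),
          mul_zero]
    rw [h, eval_zero] at h1
    refine mul_ne_zero hai (Finset.prod_ne_zero_iff.2 fun j hj => ?_) h1.symm
    exact sub_ne_zero.2 (Finset.ne_of_mem_erase hj).symm
  have hunit : IsUnit (aeval f P) := by
    by_contra h
    rw [(IsAlgClosed.splits P).eq_prod_roots, map_mul, aeval_C] at h
    have hlead : IsUnit (algebraMap K (Module.End K V) P.leadingCoeff) :=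
      (isUnit_iff_ne_zero.2 (leadingCoeff_ne_zero.2 hP0)).map _
    obtain ⟨k, hk, -⟩ := spectrum.exists_mem_of_not_isUnit_aeval_prod
      (p := P) (a := f) fun h' => h (hlead.mul h')
    simp [hf] at hk
  have hPy : aeval f P y = aeval f (∏ j ∈ s, (X - C j)) (∑ i ∈ s, a i • v i) := by
    rw [hP, map_sum, LinearMap.sum_apply, map_sum]
    refine Finset.sum_congr rfl fun j hj => ?_
    have hvj : aeval f (X - C j) (v j) = y := by simpa using hv j
    rw [← Finset.prod_erase_mul s _ hj, map_smul, map_mul _ (∏ j ∈ s.erase j, (X - C j)),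
      Module.End.mul_apply, hvj, map_mul, aeval_C, Module.End.mul_apply,
      Module.algebraMap_end_apply]
  rw [ha, map_zero] at hPy
  exact hy (((Module.End.isUnit_iff _).1 hunit).injective (hPy.trans (map_zero _).symm))

/-- **Schur's lemma** for a simple module whose dimension is smaller than the cardinality of the
algebraically closed base field. -/
theorem Module.End.exists_forall_apply_eq_smul_of_rank_lt.{u, v, w} {K : Type u} {A : Type v}
    {V : Type w} [Field K] [IsAlgClosed K]
    [Ring A] [Algebra K A] [AddCommGroup V] [Module K V] [Module A V] [IsScalarTower K A V]
    [IsSimpleModule A V]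
    (hrank : Cardinal.lift.{u} (Module.rank K V) < Cardinal.lift.{w} (Cardinal.mk K))
    (φ : Module.End A V) : ∃ c : K, ∀ v, φ v = c • v := by
  by_contra! hφ
  have hbij (c : K) : Function.Bijective (φ - algebraMap K (Module.End A V) c) := by
    refine LinearMap.bijective_of_ne_zero fun h => ?_
    obtain ⟨v, hv⟩ := hφ c
    exact hv (by simpa [sub_eq_zero] using LinearMap.congr_fun h v)
  let f : Module.End K V := φ.restrictScalars K
  have hsub (c : K) (v : V) : (f - algebraMap K (Module.End K V) c) v =
      (φ - algebraMap K (Module.End A V) c) v := by simp [f]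
  have hspec : spectrum K f = ∅ := by
    refine Set.eq_empty_of_forall_notMem fun c hc => spectrum.mem_iff.1 hc ?_
    rw [← IsUnit.neg_iff, neg_sub, Module.End.isUnit_iff, funext (hsub c)]
    exact hbij c
  have := IsSimpleModule.nontrivial A V
  obtain ⟨y, hy⟩ := exists_ne (0 : V)
  choose v hv using fun c => (hbij c).surjective y
  exact (linearIndependent_of_spectrum_eq_empty hspec hy
    fun c => (hsub c (v c)).trans (hv c)).cardinal_lift_le_rank.not_gt hrank

/-- **Jacobson density**: on finitely many vectors of a simple module of small dimension, every
linear endomorphism agrees with the action of some element of the algebra. -/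
theorem exists_smul_eq_of_isSimpleModule_of_rank_lt.{u, v, w} {K : Type u} {A : Type v}
    {V : Type w} [Field K] [IsAlgClosed K]
    [Ring A] [Algebra K A] [AddCommGroup V] [Module K V] [Module A V] [IsScalarTower K A V]
    [IsSimpleModule A V]
    (hrank : Cardinal.lift.{u} (Module.rank K V) < Cardinal.lift.{w} (Cardinal.mk K))
    (f : Module.End K V) (s : Finset V) : ∃ a : A, ∀ v ∈ s, f v = a • v := by
  let g : Module.End (Module.End A V) V :=
    { toFun := f
      map_add' := map_add f
      map_smul' := fun φ v => by
        obtain ⟨c, hc⟩ := Module.End.exists_forall_apply_eq_smul_of_rank_lt hrank φ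
        simp [hc] }
  exact jacobson_density g s

/-- A simple module over a countable-dimensional algebra has countable dimension. -/
theorem rank_le_aleph0_of_isSimpleModule {K A V : Type*} [Field K] [Ring A] [Algebra K A]
    [AddCommGroup V] [Module K V] [Module A V] [IsScalarTower K A V] [IsSimpleModule A V]
    {s : Set A} (hs : s.Countable) (hspan : Submodule.span K s = ⊤) :
    Module.rank K V ≤ Cardinal.aleph0 := by
  have := IsSimpleModule.nontrivial A V
  obtain ⟨y, hy⟩ := exists_ne (0 : V)
  let e : A →ₗ[K] V := (LinearMap.toSpanSingleton A V y).restrictScalars K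
  have he : Function.Surjective e := IsSimpleModule.toSpanSingleton_surjective A hy
  rw [← rank_top K V, ← LinearMap.range_eq_top.2 he, ← Submodule.map_top, ← hspan,
    Submodule.map_span]
  exact (rank_span_le _).trans (Cardinal.mk_le_aleph0_iff.2 (hs.image e).to_subtype)

/-- Density for a strictly simple module given by a representation of a countable-dimensional
complex algebra. -/
theorem exists_apply_eq_of_countable {A V : Type*} [Ring A] [Algebra ℂ A] [AddCommGroup V]
    [Module ℂ V] [Nontrivial V] (ρ : A →ₐ[ℂ] Module.End ℂ V)
    (hcount : ∃ s : Set A, s.Countable ∧ Submodule.span ℂ s = ⊤)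
    (hsimple : ∀ S : Submodule ℂ V, (∀ a, ∀ x ∈ S, ρ a x ∈ S) → S = ⊥ ∨ S = ⊤)
    (f : Module.End ℂ V) (s : Finset V) : ∃ a : A, ∀ v ∈ s, f v = ρ a v := by
  let : Module A V := Module.compHom V ρ.toRingHom
  have smul_def (a : A) (v : V) : a • v = ρ a v := rfl
  have : IsScalarTower ℂ A V := ⟨fun c a v => by simp [smul_def]⟩
  have : IsSimpleModule A V :=
    { exists_pair_ne := exists_pair_ne _
      eq_bot_or_eq_top := fun S => by
        refine (hsimple (S.restrictScalars ℂ) fun a x hx => S.smul_mem a hx).imp ?_ ?_ <;>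
        simp }
  obtain ⟨t, ht, hspan⟩ := hcount
  refine exists_smul_eq_of_isSimpleModule_of_rank_lt (K := ℂ) (A := A) ?_ f s
  calc Cardinal.lift (Module.rank ℂ V) ≤ Cardinal.aleph0 := by
        simpa using rank_le_aleph0_of_isSimpleModule ht hspan
    _ < Cardinal.lift (Cardinal.mk ℂ) := by
        simpa [Cardinal.mk_complex] using Cardinal.aleph0_lt_continuum

/-- Let `B, B'` be unital associative ℂ-algebras with `B'` of countable
dimension, `M'` a strictly simple `B'`-module, and `M` any `B`-module (actions given by
algebra maps into endomorphism algebras). Then `M ⊗ M'` is a simple `B ⊗ B'`-module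
(with `(b ⊗ b')·(x ⊗ x') = bx ⊗ b'x'`) if and only if `M` is a simple `B`-module. -/
theorem tensor_with_strictly_simple_module_simple_iff
    (B B' : Type*) [Ring B] [Algebra ℂ B] [Ring B'] [Algebra ℂ B']
    (hcount : ∃ s : Set B', s.Countable ∧ Submodule.span ℂ s = ⊤)
    (M M' : Type*) [AddCommGroup M] [Module ℂ M] [AddCommGroup M'] [Module ℂ M']
    (ρ : B →ₐ[ℂ] Module.End ℂ M) (ρ' : B' →ₐ[ℂ] Module.End ℂ M')
    (hM'nontriv : Nontrivial M')
    (hM'strict : ∀ S : Submodule ℂ M',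
      (∀ (b' : B'), ∀ x ∈ S, ρ' b' x ∈ S) → S = ⊥ ∨ S = ⊤) :
    (Nontrivial (M ⊗[ℂ] M') ∧
      ∀ N : Submodule ℂ (M ⊗[ℂ] M'),
        (∀ (b : B) (b' : B'), ∀ x ∈ N, TensorProduct.map (ρ b) (ρ' b') x ∈ N) →
        N = ⊥ ∨ N = ⊤) ↔
    (Nontrivial M ∧
      ∀ P : Submodule ℂ M, (∀ (b : B), ∀ x ∈ P, ρ b x ∈ P) → P = ⊥ ∨ P = ⊤) := by
  constructor
  · rintro ⟨hne, h⟩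
    refine ⟨not_subsingleton_iff_nontrivial.1 fun _ => ?_, fun P hP => ?_⟩
    · exact not_subsingleton (M ⊗[ℂ] M') inferInstance
    obtain ⟨y, hy⟩ := exists_ne (0 : M')
    obtain ⟨g, hg⟩ := Module.Projective.exists_dual_eq_one ℂ hy
    let contract (φ : Module.Dual ℂ M') : M ⊗[ℂ] M' →ₗ[ℂ] M :=
      (TensorProduct.rid ℂ M).toLinearMap ∘ₗ φ.lTensor M
    have contract_tmul (φ : Module.Dual ℂ M') (x : M) (y : M') :
        contract φ (x ⊗ₜ y) = φ y • x := by simp [contract]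
    have contract_map (φ : Module.Dual ℂ M') (b : B) (b' : B') (t : M ⊗[ℂ] M') :
        contract φ (TensorProduct.map (ρ b) (ρ' b') t) = ρ b (contract (φ ∘ₗ ρ' b') t) := by
      induction t with
      | zero => simp
      | tmul x y => simp [contract_tmul]
      | add t u ht hu => simp only [map_add, ht, hu]
    let N : Submodule ℂ (M ⊗[ℂ] M') := ⨅ φ, P.comap (contract φ)
    have mem_N (t : M ⊗[ℂ] M') : t ∈ N ↔ ∀ φ, contract φ t ∈ P := by simp [N]
    refine (h N fun b b' t ht => ?_).imp (fun hbot => ?_) fun htop => ?_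
    · refine (mem_N _).2 fun φ => ?_
      rw [contract_map]
      exact hP b _ ((mem_N t).1 ht _)
    · refine (Submodule.eq_bot_iff P).2 fun x hx => ?_
      have hxy : x ⊗ₜ[ℂ] y ∈ N := (mem_N _).2 fun φ => by
        rw [contract_tmul]
        exact P.smul_mem _ hx
      rw [hbot, Submodule.mem_bot] at hxy
      simpa [hxy, hg] using (contract_tmul g x y).symm
    · refine (Submodule.eq_top_iff').2 fun x => ?_
      have hxy := (mem_N (x ⊗ₜ[ℂ] y)).1 (htop ▸ Submodule.mem_top) g
      rwa [contract_tmul, hg, one_smul] at hxy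
  · rintro ⟨hne, h⟩
    refine ⟨inferInstance, fun N hN => or_iff_not_imp_left.2 fun hN0 => ?_⟩
    obtain ⟨t, ht, ht0⟩ := N.ne_bot_iff.1 hN0
    classical
    let 𝒞 := Module.Basis.ofVectorSpace ℂ M'
    set w := TensorProduct.equivFinsuppOfBasisRight (M := M) 𝒞 t with hw
    have htw : t = w.sum fun i m => m ⊗ₜ 𝒞 i := by
      rw [← TensorProduct.equivFinsuppOfBasisRight_symm_apply, hw, LinearEquiv.symm_apply_apply]
    obtain ⟨j, hj⟩ : ∃ j, w j ≠ 0 := by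
      by_contra! hall
      exact ht0 (by rw [htw, show w = 0 from Finsupp.ext hall, Finsupp.sum_zero_index])
    obtain ⟨b', hb'⟩ := exists_apply_eq_of_countable ρ' hcount hM'strict
      ((𝒞.coord j).smulRight (𝒞 j)) (w.support.image 𝒞)
    have hpure : w j ⊗ₜ[ℂ] 𝒞 j ∈ N := by
      have hmem := hN 1 b' t ht
      rw [htw, Finsupp.sum, map_sum, Finset.sum_eq_single j] at hmem
      · rwa [TensorProduct.map_tmul, map_one, Module.End.one_apply,
          ← hb' _ (Finset.mem_image_of_mem _ (Finsupp.mem_support_iff.2 hj)),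
          LinearMap.smulRight_apply, 𝒞.coord_apply, 𝒞.repr_self, Finsupp.single_eq_same,
          one_smul] at hmem
      · intro i hi hij
        rw [TensorProduct.map_tmul, ← hb' _ (Finset.mem_image_of_mem _ hi)]
        simp [hij]
      · exact fun hj' => absurd (Finsupp.mem_support_iff.2 hj) hj'
    have hleft (x : M) : x ⊗ₜ[ℂ] 𝒞 j ∈ N := by
      have htop := (h (N.comap ((TensorProduct.mk ℂ M M').flip (𝒞 j))) fun b x hx => by
        simpa using hN b 1 _ hx).resolve_left fun hbot =>
          hj ((Submodule.mem_bot ℂ).1 (hbot ▸ hpure))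
      exact (htop ▸ Submodule.mem_top : x ∈ N.comap ((TensorProduct.mk ℂ M M').flip (𝒞 j)))
    have hall (x : M) (y : M') : x ⊗ₜ[ℂ] y ∈ N := by
      by_cases hx : x = 0
      · simp [hx]
      have htop := (hM'strict (N.comap (TensorProduct.mk ℂ M M' x)) fun b y hy => by
        simpa using hN 1 b _ hy).resolve_left fun hbot =>
          𝒞.ne_zero j ((Submodule.mem_bot ℂ).1 (hbot ▸ hleft x))
      exact (htop ▸ Submodule.mem_top : y ∈ N.comap (TensorProduct.mk ℂ M M' x))
    rw [eq_top_iff, ← TensorProduct.span_tmul_eq_top, Submodule.span_le]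
    rintro _ ⟨x, y, rfl⟩
    exact hall x y
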